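/- Let L be an infeasible linear pencil of size m (in any number n of variables). Then −1 ∈ M_L^(2^(m−1)−1), i.e., there exist polynomials pᵢ ∈ ℝ[X₁,…,Xₙ] of degree at most 2^(m−1)−1 and vectors of polynomials vⱼ ∈ ℝ[X₁,…,Xₙ]ᵐ with all entries of degree at most 2^(m−1)−1 such that −1 = Σᵢ pᵢ² + Σⱼ vⱼᵀ L vⱼ. -/

import Mathlib

open MvPolynomial Matrix

/-- The linear pencil `L = A 0 + X 1 * A 1 + ... + X n * A n` as a symmetric matrix
with entries in the polynomial ring `ℝ[X 1, ..., X n]`. -/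
noncomputable def pencilPoly {n m : ℕ} (A : Fin (n+1) → Matrix (Fin m) (Fin m) ℝ) :
    Matrix (Fin m) (Fin m) (MvPolynomial (Fin n) ℝ) :=
  fun a b => MvPolynomial.C (A 0 a b) + ∑ i : Fin n, MvPolynomial.X i * MvPolynomial.C (A i.succ a b)

/-- Evaluation of the pencil at a point `x ∈ ℝⁿ`. -/
def pencilEval {n m : ℕ} (A : Fin (n+1) → Matrix (Fin m) (Fin m) ℝ) (x : Fin n → ℝ) :
    Matrix (Fin m) (Fin m) ℝ :=
  A 0 + ∑ i : Fin n, x i • A i.succ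

/-- The spectrahedron `S_L = {x ∈ ℝⁿ ∣ L(x) ⪰ 0}`. -/
def specSet {n m : ℕ} (A : Fin (n+1) → Matrix (Fin m) (Fin m) ℝ) : Set (Fin n → ℝ) :=
  {x | (pencilEval A x).PosSemidef}

/-- `vᵀ L v` for a vector `v` of polynomials. -/
noncomputable def vLv {n m : ℕ} (A : Fin (n+1) → Matrix (Fin m) (Fin m) ℝ)
    (v : Fin m → MvPolynomial (Fin n) ℝ) : MvPolynomial (Fin n) ℝ :=
  ∑ a : Fin m, ∑ b : Fin m, v a * pencilPoly A a b * v b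

/-- Membership in the quadratic module `M_L` associated to the pencil `L`:
`p = s + Σⱼ vⱼᵀ L vⱼ` with `s` a sum of squares. -/
def memQM {n m : ℕ} (A : Fin (n+1) → Matrix (Fin m) (Fin m) ℝ)
    (p : MvPolynomial (Fin n) ℝ) : Prop :=
  ∃ (k r : ℕ) (q : Fin k → MvPolynomial (Fin n) ℝ)
    (v : Fin r → Fin m → MvPolynomial (Fin n) ℝ),
    p = ∑ i, (q i)^2 + ∑ j, vLv A (v j)

/-- Membership in the truncated quadratic module `M_L^(k)` associated to `L`:
`p = Σᵢ pᵢ² + Σⱼ vⱼᵀ L vⱼ` where the `pᵢ` and all entries of the `vⱼ` have degree `≤ k`. -/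
def memQMdeg {n m : ℕ} (A : Fin (n+1) → Matrix (Fin m) (Fin m) ℝ) (k : ℕ)
    (p : MvPolynomial (Fin n) ℝ) : Prop :=
  ∃ (k₁ k₂ : ℕ) (q : Fin k₁ → MvPolynomial (Fin n) ℝ)
    (v : Fin k₂ → Fin m → MvPolynomial (Fin n) ℝ),
    (∀ i, (q i).totalDegree ≤ k) ∧ (∀ j a, (v j a).totalDegree ≤ k) ∧
    p = ∑ i, (q i)^2 + ∑ j, vLv A (v j)

theorem isCompact_convexHull_of_finiteDimensional {E : Type*} [NormedAddCommGroup E]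
    [NormedSpace ℝ E] [FiniteDimensional ℝ E] {s : Set E} (hs : IsCompact s) :
    IsCompact (convexHull ℝ s) := by
  have key : convexHull ℝ s = ⋃ k ∈ Finset.range (Module.finrank ℝ E + 2),
      (fun p : (Fin k → ℝ) × (Fin k → E) => ∑ i, p.1 i • p.2 i) ''
        (stdSimplex ℝ (Fin k) ×ˢ Set.univ.pi fun _ => s) := by
    ext x
    simp only [Set.mem_iUnion, Set.mem_image, Finset.mem_range, Prod.exists, Set.mem_prod,
      Set.mem_univ_pi, exists_prop]
    constructor
    · intro hx
      obtain ⟨ι, _, z, w, hz, hind, hw, hw1, rfl⟩ := eq_pos_convex_span_of_mem_convexHull hx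
      let e := Fintype.equivFin ι
      have hcard : Fintype.card ι ≤ Module.finrank ℝ E + 1 :=
        hind.card_le_finrank_succ.trans (by gcongr; exact Submodule.finrank_le _)
      refine ⟨Fintype.card ι, by omega, w ∘ e.symm, z ∘ e.symm,
        ⟨⟨fun i => (hw _).le, ?_⟩, fun i => hz ⟨_, rfl⟩⟩, ?_⟩
      · rw [← hw1]; exact e.symm.sum_comp w
      · exact e.symm.sum_comp fun i => w i • z i
    · rintro ⟨k, -, w, z, ⟨⟨hw, hw1⟩, hz⟩, rfl⟩
      exact mem_convexHull_of_exists_fintype w z hw hw1 hz rfl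
  rw [key]
  refine (Finset.range _).isCompact_biUnion fun k _ => ?_
  refine ((isCompact_stdSimplex ℝ (Fin k)).prod (isCompact_univ_pi fun _ => hs)).image ?_
  fun_prop

/-- The affine polynomial with constant term `c 0` and linear coefficients `c 1, ..., c n`. -/
noncomputable def affinePoly (n : ℕ) : (Fin (n+1) → ℝ) →ₗ[ℝ] MvPolynomial (Fin n) ℝ where
  toFun c := C (c 0) + ∑ i : Fin n, X i * C (c i.succ)
  map_add' c c' := by
    simp only [Pi.add_apply, C_add, mul_add, Finset.sum_add_distrib]
    ring
  map_smul' r c := by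
    simp only [Pi.smul_apply, smul_eq_mul, C_mul, RingHom.id_apply, smul_eq_C_mul, mul_add,
      Finset.mul_sum]
    congr 1
    exact Finset.sum_congr rfl fun i _ => by ring

theorem affinePoly_apply {n : ℕ} (c : Fin (n+1) → ℝ) :
    affinePoly n c = C (c 0) + ∑ i : Fin n, X i * C (c i.succ) := rfl

theorem totalDegree_affinePoly_le {n : ℕ} (c : Fin (n+1) → ℝ) :
    (affinePoly n c).totalDegree ≤ 1 := by
  refine (totalDegree_add _ _).trans (max_le (by simp) ?_)
  refine totalDegree_finsetSum_le fun i _ => ?_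
  exact (totalDegree_mul _ _).trans (by simp)

theorem affinePoly_single_zero (n : ℕ) : affinePoly n (Pi.single 0 1) = 1 := by
  simp [affinePoly_apply]

theorem pencilPoly_apply {n m : ℕ} (A : Fin (n+1) → Matrix (Fin m) (Fin m) ℝ) (a b : Fin m) :
    pencilPoly A a b = affinePoly n fun k => A k a b := rfl

theorem pencilPoly_isSymm {n m : ℕ} {A : Fin (n+1) → Matrix (Fin m) (Fin m) ℝ}
    (hA : ∀ i, (A i).IsSymm) : (pencilPoly A).IsSymm :=
  Matrix.IsSymm.ext fun a b => by simp only [pencilPoly_apply, (hA _).apply]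

theorem vLv_eq_dotProduct {n m : ℕ} (A : Fin (n+1) → Matrix (Fin m) (Fin m) ℝ)
    (v : Fin m → MvPolynomial (Fin n) ℝ) : vLv A v = v ⬝ᵥ pencilPoly A *ᵥ v := by
  simp only [vLv, dotProduct, mulVec, Finset.mul_sum, mul_assoc]

theorem vLv_mul {n m : ℕ} (A : Fin (n+1) → Matrix (Fin m) (Fin m) ℝ)
    (p : MvPolynomial (Fin n) ℝ) (v : Fin m → MvPolynomial (Fin n) ℝ) :
    vLv A (p • v) = p ^ 2 * vLv A v := by
  rw [vLv_eq_dotProduct, vLv_eq_dotProduct, mulVec_smul, smul_dotProduct, dotProduct_smul,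
    smul_eq_mul, smul_eq_mul]
  ring

theorem pencilPoly_mulVec_C {n m : ℕ} (A : Fin (n+1) → Matrix (Fin m) (Fin m) ℝ)
    (u : Fin m → ℝ) (i : Fin m) :
    (pencilPoly A *ᵥ fun a => C (u a)) i = affinePoly n fun k => (A k *ᵥ u) i := by
  have : (fun k => (A k *ᵥ u) i) = ∑ b, u b • fun k => A k i b := by
    ext k
    simp [mulVec, dotProduct, mul_comm]
  rw [this, map_sum]
  simp only [map_smul, ← pencilPoly_apply, mulVec, dotProduct, smul_eq_C_mul, mul_comm]

theorem vLv_C {n m : ℕ} (A : Fin (n+1) → Matrix (Fin m) (Fin m) ℝ) (u : Fin m → ℝ) :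
    vLv A (fun a => C (u a)) = affinePoly n fun k => u ⬝ᵥ A k *ᵥ u := by
  have : (fun k => u ⬝ᵥ A k *ᵥ u) = ∑ b, u b • fun k => (A k *ᵥ u) b := by
    ext k
    simp [dotProduct]
  rw [this, map_sum, vLv_eq_dotProduct, dotProduct]
  simp only [pencilPoly_mulVec_C, map_smul, smul_eq_C_mul]

theorem vLv_smul_C_add_single {n m : ℕ} {A : Fin (n+1) → Matrix (Fin m) (Fin m) ℝ}
    (hA : ∀ i, (A i).IsSymm) (u : Fin m → ℝ) (i : Fin m) (p w : MvPolynomial (Fin n) ℝ) :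
    vLv A (p • (fun a => C (u a)) + Pi.single i w) =
      p ^ 2 * vLv A (fun a => C (u a)) + 2 * p * w * affinePoly n (fun k => (A k *ᵥ u) i) +
        w ^ 2 * pencilPoly A i i := by
  have hs : ∀ x y, x ⬝ᵥ pencilPoly A *ᵥ y = y ⬝ᵥ pencilPoly A *ᵥ x := fun x y => by
    rw [dotProduct_mulVec, ← mulVec_transpose, (pencilPoly_isSymm hA).eq, dotProduct_comm]
  rw [← vLv_mul, vLv_eq_dotProduct, vLv_eq_dotProduct, mulVec_add, add_dotProduct,
    dotProduct_add, dotProduct_add, hs _ (Pi.single i w), single_dotProduct, single_dotProduct,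
    mulVec_smul, Pi.smul_apply, pencilPoly_mulVec_C, mulVec_single]
  simp only [smul_eq_mul, Pi.smul_apply, MulOpposite.smul_eq_mul_unop, MulOpposite.unop_op,
    Matrix.col_apply]
  ring

theorem vLv_submatrix_succAbove {n m : ℕ} (A : Fin (n+1) → Matrix (Fin (m+1)) (Fin (m+1)) ℝ)
    (a : Fin (m+1)) (v : Fin m → MvPolynomial (Fin n) ℝ) :
    vLv (fun k => (A k).submatrix a.succAbove a.succAbove) v =
      vLv A (a.insertNth (α := fun _ => MvPolynomial (Fin n) ℝ) 0 v) := by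
  simp [vLv, Fin.sum_univ_succAbove _ a, pencilPoly_apply]

/-- The quadratic module of the pencil `A` truncated at degree `d`, enlarged by the products of
polynomials of degree at most `2 * d` with the affine polynomials from `G`. -/
noncomputable def relQM {n m : ℕ} (A : Fin (n+1) → Matrix (Fin m) (Fin m) ℝ)
    (G : Submodule ℝ (Fin (n+1) → ℝ)) (d : ℕ) : AddSubmonoid (MvPolynomial (Fin n) ℝ) :=
  AddSubmonoid.closure
    ({f | ∃ q : MvPolynomial (Fin n) ℝ, q.totalDegree ≤ d ∧ q ^ 2 = f} ∪
      {f | ∃ v : Fin m → MvPolynomial (Fin n) ℝ, (∀ a, (v a).totalDegree ≤ d) ∧ vLv A v = f} ∪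
      {f | ∃ q : MvPolynomial (Fin n) ℝ, q.totalDegree ≤ 2 * d ∧
        ∃ g ∈ G, q * affinePoly n g = f})

section relQM

variable {n m : ℕ} {A : Fin (n+1) → Matrix (Fin m) (Fin m) ℝ}
  {G : Submodule ℝ (Fin (n+1) → ℝ)} {d e : ℕ}

theorem sq_mem_relQM {q : MvPolynomial (Fin n) ℝ} (hq : q.totalDegree ≤ d) :
    q ^ 2 ∈ relQM A G d :=
  AddSubmonoid.subset_closure (.inl (.inl ⟨q, hq, rfl⟩))

theorem vLv_mem_relQM {v : Fin m → MvPolynomial (Fin n) ℝ} (hv : ∀ a, (v a).totalDegree ≤ d) :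
    vLv A v ∈ relQM A G d :=
  AddSubmonoid.subset_closure (.inl (.inr ⟨v, hv, rfl⟩))

theorem mul_affinePoly_mem_relQM {q : MvPolynomial (Fin n) ℝ} (hq : q.totalDegree ≤ 2 * d)
    {g : Fin (n+1) → ℝ} (hg : g ∈ G) : q * affinePoly n g ∈ relQM A G d :=
  AddSubmonoid.subset_closure (.inr ⟨q, hq, g, hg, rfl⟩)

theorem relQM_le {N : AddSubmonoid (MvPolynomial (Fin n) ℝ)}
    (hsq : ∀ q : MvPolynomial (Fin n) ℝ, q.totalDegree ≤ d → q ^ 2 ∈ N)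
    (hv : ∀ v : Fin m → MvPolynomial (Fin n) ℝ, (∀ a, (v a).totalDegree ≤ d) → vLv A v ∈ N)
    (hg : ∀ q : MvPolynomial (Fin n) ℝ, q.totalDegree ≤ 2 * d → ∀ g ∈ G,
      q * affinePoly n g ∈ N) : relQM A G d ≤ N := by
  refine AddSubmonoid.closure_le.2 ?_
  rintro f ((⟨q, hq, rfl⟩ | ⟨v, hv', rfl⟩) | ⟨q, hq, g, hg', rfl⟩)
  exacts [hsq q hq, hv v hv', hg q hq g hg']

theorem relQM_mono (h : d ≤ e) : relQM A G d ≤ relQM A G e :=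
  relQM_le (fun _ hq => sq_mem_relQM (hq.trans h))
    (fun _ hv => vLv_mem_relQM fun a => (hv a).trans h)
    fun _ hq _ hg => mul_affinePoly_mem_relQM (hq.trans (by lia)) hg

theorem sq_mul_mem_relQM {p f : MvPolynomial (Fin n) ℝ} (hp : p.totalDegree ≤ e)
    (hf : f ∈ relQM A G d) : p ^ 2 * f ∈ relQM A G (d + e) := by
  suffices relQM A G d ≤ (relQM A G (d + e)).comap (AddMonoidHom.mulLeft (p ^ 2)) from this hf
  refine relQM_le (fun q hq => ?_) (fun v hv => ?_) fun q hq g hg => ?_ <;>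
    simp only [AddSubmonoid.mem_comap, AddMonoidHom.coe_mulLeft]
  · rw [← mul_pow]
    exact sq_mem_relQM ((totalDegree_mul _ _).trans (by lia))
  · rw [← vLv_mul]
    exact vLv_mem_relQM fun a => (totalDegree_mul _ _).trans (by have := hv a; lia)
  · rw [← mul_assoc]
    refine mul_affinePoly_mem_relQM ((totalDegree_mul _ _).trans ?_) hg
    have := totalDegree_pow p 2
    lia

theorem C_mul_mem_relQM {c : ℝ} (hc : 0 ≤ c) {f : MvPolynomial (Fin n) ℝ}
    (hf : f ∈ relQM A G d) : C c * f ∈ relQM A G d := by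
  have := sq_mul_mem_relQM (p := C (√c)) (e := 0) (by simp) hf
  rwa [← C_pow, Real.sq_sqrt hc] at this

theorem C_mem_relQM {c : ℝ} (hc : 0 ≤ c) : C c ∈ relQM A G d := by
  simpa using C_mul_mem_relQM hc (sq_mem_relQM (A := A) (G := G) (d := d) (q := 1) (by simp))

theorem neg_sq_mul_mem_relQM (hA : ∀ i, (A i).IsSymm) {u : Fin m → ℝ}
    (hu : -vLv A (fun a => C (u a)) ∈ relQM A G 0) {q : MvPolynomial (Fin n) ℝ}
    (hq : q.totalDegree ≤ d) (i : Fin m) :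
    -(q * affinePoly n (fun k => (A k *ᵥ u) i)) ^ 2 ∈ relQM A G (d + 1) := by
  have hb1 := totalDegree_affinePoly_le fun k => (A k *ᵥ u) i
  have hexp := fun p w => vLv_smul_C_add_single hA u i p w
  generalize affinePoly n (fun k => (A k *ᵥ u) i) = b at hb1 hexp ⊢
  have hL1 : (pencilPoly A i i).totalDegree ≤ 1 := by
    rw [pencilPoly_apply]
    exact totalDegree_affinePoly_le _
  obtain ⟨p, hp⟩ : ∃ p, p = C (1 / 2) * q * (1 + pencilPoly A i i) := ⟨_, rfl⟩
  have hp1 : p.totalDegree ≤ d + 1 := by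
    rw [hp]
    refine (totalDegree_mul _ _).trans (add_le_add ?_ ?_)
    · exact (totalDegree_mul _ _).trans (by simpa using hq)
    · exact (totalDegree_add _ _).trans (by simpa using hL1)
  have hw1 : (-(q * b)).totalDegree ≤ d + 1 := by
    rw [totalDegree_neg]
    exact (totalDegree_mul _ _).trans (by lia)
  have h1 : vLv A (p • (fun a => C (u a)) + Pi.single i (-(q * b))) ∈ relQM A G (d + 1) := by
    refine vLv_mem_relQM fun a => (totalDegree_add _ _).trans (max_le ?_ ?_)
    · simpa using (totalDegree_mul p (C (u a))).trans (by simpa using hp1)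
    · obtain rfl | h := eq_or_ne a i
      · simpa using hw1
      · simp [h]
  have h2 := sq_mul_mem_relQM hp1 hu
  rw [zero_add] at h2
  convert add_mem h1 h2 using 1
  rw [hexp]
  have h3 : 2 * p = q * (1 + pencilPoly A i i) := by
    rw [hp, show (2 : MvPolynomial (Fin n) ℝ) = C 2 from (map_ofNat C 2).symm, ← mul_assoc,
      ← mul_assoc, ← C_mul]
    norm_num
  rw [h3]
  ring

theorem mul_add_C_mem_relQM (hA : ∀ i, (A i).IsSymm) {u : Fin m → ℝ}
    (hu : -vLv A (fun a => C (u a)) ∈ relQM A G 0) {q : MvPolynomial (Fin n) ℝ}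
    (hq : q.totalDegree ≤ d) (i : Fin m) {ε : ℝ} (hε : 0 < ε) :
    q * affinePoly n (fun k => (A k *ᵥ u) i) + C ε ∈ relQM A G (d + 1) := by
  set b := affinePoly n (fun k => (A k *ᵥ u) i) with hb
  have hb1 : b.totalDegree ≤ 1 := totalDegree_affinePoly_le _
  have h1 := C_mul_mem_relQM (c := 1 / (4 * ε)) (by positivity) (neg_sq_mul_mem_relQM hA hu hq i)
  have h2 : (C (1 / (2 * ε)) * (q * b) + 1) ^ 2 ∈ relQM A G (d + 1) := by
    refine sq_mem_relQM ((totalDegree_add _ _).trans (max_le ?_ (by simp)))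
    refine (totalDegree_mul _ _).trans ?_
    have := totalDegree_mul q b
    rw [totalDegree_C]
    lia
  convert add_mem (C_mul_mem_relQM hε.le h2) h1 using 1
  have e1 : C ε * C (1 / (2 * ε)) ^ 2 = (C (1 / (4 * ε)) : MvPolynomial (Fin n) ℝ) := by
    rw [← C_pow, ← C_mul]; congr 1; field_simp; norm_num
  have e2 : C ε * C (1 / (2 * ε)) * 2 = (1 : MvPolynomial (Fin n) ℝ) := by
    rw [show (2 : MvPolynomial (Fin n) ℝ) = C 2 from (map_ofNat C 2).symm, ← C_mul, ← C_mul,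
      ← C_1]
    congr 1; field_simp
  rw [← hb]
  linear_combination -(q * b) ^ 2 * e1 - (q * b) * e2

theorem neg_one_mem_of_neg_C_mem {c : ℝ} (hc : 0 < c) (h : -C c ∈ relQM A G d) :
    -1 ∈ relQM A G d := by
  have := C_mul_mem_relQM (inv_nonneg.2 hc.le) h
  rwa [mul_neg, ← C_mul, inv_mul_cancel₀ hc.ne', C_1] at this

end relQM

/-- Feasible points of the pencil on the zero set of `G`. -/
def relSpecSet {n m : ℕ} (A : Fin (n+1) → Matrix (Fin m) (Fin m) ℝ)
    (G : Submodule ℝ (Fin (n+1) → ℝ)) : Set (Fin n → ℝ) :=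
  {x | (pencilEval A x).PosSemidef ∧ ∀ g ∈ G, g 0 + ∑ i : Fin n, x i * g i.succ = 0}

theorem pencilEval_apply {n m : ℕ} (A : Fin (n+1) → Matrix (Fin m) (Fin m) ℝ) (x : Fin n → ℝ)
    (a b : Fin m) : pencilEval A x a b = A 0 a b + ∑ i : Fin n, x i * A i.succ a b := by
  simp [pencilEval, Matrix.sum_apply]

theorem pencilEval_mulVec {n m : ℕ} (A : Fin (n+1) → Matrix (Fin m) (Fin m) ℝ) (x : Fin n → ℝ)
    (u : Fin m → ℝ) : pencilEval A x *ᵥ u = A 0 *ᵥ u + ∑ i : Fin n, x i • A i.succ *ᵥ u := by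
  simp [pencilEval, add_mulVec, sum_mulVec, smul_mulVec]

theorem pencilEval_isSymm {n m : ℕ} {A : Fin (n+1) → Matrix (Fin m) (Fin m) ℝ}
    (hA : ∀ i, (A i).IsSymm) (x : Fin n → ℝ) : (pencilEval A x).IsSymm :=
  Matrix.IsSymm.ext fun a b => by simp only [pencilEval_apply, (hA _).apply]

theorem dotProduct_pencilEval_mulVec {n m : ℕ} (A : Fin (n+1) → Matrix (Fin m) (Fin m) ℝ)
    (x : Fin n → ℝ) (u : Fin m → ℝ) :
    u ⬝ᵥ pencilEval A x *ᵥ u =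
      (u ⬝ᵥ A 0 *ᵥ u) + ∑ i : Fin n, x i * (u ⬝ᵥ A i.succ *ᵥ u) := by
  rw [pencilEval_mulVec, dotProduct_add, dotProduct_sum]
  simp only [dotProduct_smul, smul_eq_mul]

theorem exists_neg_mem_relQM_of_mem_convexHull {n m : ℕ}
    {A : Fin (n+1) → Matrix (Fin m) (Fin m) ℝ} {G : Submodule ℝ (Fin (n+1) → ℝ)}
    {s : Set (Fin (n+1) → ℝ)} (hs : ∀ z ∈ s, affinePoly n z ∈ relQM A G 0)
    {g : Fin (n+1) → ℝ} (hg : g ∈ G) (hgs : g ∈ convexHull ℝ s) :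
    ∃ z ∈ s, -affinePoly n z ∈ relQM A G 0 := by
  classical
  obtain ⟨ι, _, w, z, hw, hw1, hz, hsum⟩ := mem_convexHull_iff_exists_fintype.1 hgs
  obtain ⟨i, -, hi⟩ : ∃ i ∈ Finset.univ, 0 < w i :=
    Finset.exists_lt_of_sum_lt (by simp [hw1])
  refine ⟨z i, hz i, ?_⟩
  have h1 : ∑ j ∈ Finset.univ.erase i, C (w j) * affinePoly n (z j) ∈ relQM A G 0 :=
    sum_mem fun j _ => C_mul_mem_relQM (hw j) (hs _ (hz j))
  have h2 : (-1) * affinePoly n g ∈ relQM A G 0 :=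
    mul_affinePoly_mem_relQM (by simp [totalDegree_neg]) hg
  have h3 := C_mul_mem_relQM (inv_nonneg.2 hi.le) (add_mem h1 h2)
  convert h3 using 1
  have h4 : affinePoly n g = ∑ j, C (w j) * affinePoly n (z j) := by
    rw [← hsum, map_sum]
    simp only [map_smul, smul_eq_C_mul]
  have h5 : C (w i)⁻¹ * C (w i) = (1 : MvPolynomial (Fin n) ℝ) := by
    rw [← C_mul, inv_mul_cancel₀ hi.ne', C_1]
  rw [h4, ← Finset.add_sum_erase _ _ (Finset.mem_univ i)]
  linear_combination affinePoly n (z i) * h5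

theorem dotProduct_mulVec_eq_norm_sq_smul {n m : ℕ} (A : Fin (n+1) → Matrix (Fin m) (Fin m) ℝ)
    {w : Fin m → ℝ} (hw : w ≠ 0) :
    (fun k => w ⬝ᵥ A k *ᵥ w) =
      ‖w‖ ^ 2 • fun k => (‖w‖⁻¹ • w) ⬝ᵥ A k *ᵥ (‖w‖⁻¹ • w) := by
  ext k
  have := norm_ne_zero_iff.2 hw
  simp only [Pi.smul_apply, mulVec_smul, smul_dotProduct, dotProduct_smul, smul_eq_mul]
  field_simp

theorem relSpecSet_nonempty_of_disjoint {n m : ℕ} {A : Fin (n+1) → Matrix (Fin m) (Fin m) ℝ}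
    (hA : ∀ i, (A i).IsSymm) {G : Submodule ℝ (Fin (n+1) → ℝ)}
    (hdisj : Disjoint (convexHull ℝ (insert (Pi.single 0 1)
      ((fun u k => u ⬝ᵥ A k *ᵥ u) '' Metric.sphere (0 : Fin m → ℝ) 1))) (G : Set _)) :
    (relSpecSet A G).Nonempty := by
  have hcomp : IsCompact (convexHull ℝ (insert (Pi.single 0 1)
      ((fun (u : Fin m → ℝ) k => u ⬝ᵥ A k *ᵥ u) '' Metric.sphere (0 : Fin m → ℝ) 1))) := by
    refine isCompact_convexHull_of_finiteDimensional (.insert (.image (isCompact_sphere 0 1) ?_) _)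
    fun_prop
  obtain ⟨f, r, t, hf, hrt, hfG⟩ := geometric_hahn_banach_compact_closed (convex_convexHull ℝ _)
    hcomp G.convex (Submodule.closed_of_finiteDimensional G) hdisj
  have ht : t < 0 := by simpa using hfG 0 G.zero_mem
  have hG : ∀ g ∈ G, f g = 0 := fun g hg => by
    by_contra h
    simpa [h] using hfG ((t / f g) • g) (G.smul_mem _ hg)
  have hneg : ∀ z ∈ insert (Pi.single 0 1)
      ((fun (u : Fin m → ℝ) k => u ⬝ᵥ A k *ᵥ u) '' Metric.sphere (0 : Fin m → ℝ) 1), f z < 0 :=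
    fun z hz => (hf z (subset_convexHull ℝ _ hz)).trans (hrt.trans ht)
  have h0 : f (Pi.single 0 1) < 0 := hneg _ (Set.mem_insert _ _)
  have heval : ∀ c : Fin (n+1) → ℝ, c 0 + ∑ i : Fin n,
      f (Pi.single i.succ 1) / f (Pi.single 0 1) * c i.succ = f c / f (Pi.single 0 1) := fun c => by
    have : f c = ∑ k, c k * f (Pi.single k 1) := by
      conv_lhs => rw [pi_eq_sum_univ' c]
      simp
    rw [this, Fin.sum_univ_succ, add_div, mul_div_cancel_right₀ _ h0.ne, Finset.sum_div]
    congr 1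
    exact Finset.sum_congr rfl fun i _ => by ring
  refine ⟨fun i => f (Pi.single i.succ 1) / f (Pi.single 0 1), ?_, fun g hg => ?_⟩
  · refine .of_dotProduct_mulVec_nonneg (pencilEval_isSymm hA _) fun w => ?_
    rw [star_trivial, dotProduct_pencilEval_mulVec, heval fun k => w ⬝ᵥ A k *ᵥ w]
    obtain rfl | hw := eq_or_ne w 0
    · simp [show (fun _ : Fin (n+1) => (0 : ℝ)) = 0 from rfl]
    · rw [dotProduct_mulVec_eq_norm_sq_smul A hw, map_smul]
      refine div_nonneg_of_nonpos (mul_nonpos_of_nonneg_of_nonpos (by positivity) ?_) h0.le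
      refine (hneg _ (Set.mem_insert_of_mem _ ⟨_, ?_, rfl⟩)).le
      simp [norm_smul, norm_ne_zero_iff.2 hw]
  · rw [heval, hG g hg, zero_div]

theorem neg_one_mem_or_exists_neg_vLv_mem {n m : ℕ} {A : Fin (n+1) → Matrix (Fin m) (Fin m) ℝ}
    (hA : ∀ i, (A i).IsSymm) {G : Submodule ℝ (Fin (n+1) → ℝ)} (h : relSpecSet A G = ∅) :
    -1 ∈ relQM A G 0 ∨ ∃ u : Fin m → ℝ, u ≠ 0 ∧ -vLv A (fun a => C (u a)) ∈ relQM A G 0 := by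
  have hnd := mt (relSpecSet_nonempty_of_disjoint hA) (Set.not_nonempty_iff_eq_empty.2 h)
  obtain ⟨g, hgs, hg⟩ := Set.not_disjoint_iff.1 hnd
  have hmem : ∀ z ∈ insert (Pi.single 0 1)
      ((fun (u : Fin m → ℝ) k => u ⬝ᵥ A k *ᵥ u) '' Metric.sphere (0 : Fin m → ℝ) 1),
      affinePoly n z ∈ relQM A G 0 := by
    rintro z (rfl | ⟨u, -, rfl⟩)
    · rw [affinePoly_single_zero, ← C_1]
      exact C_mem_relQM zero_le_one
    · rw [← vLv_C]
      exact vLv_mem_relQM fun a => by simp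
  obtain ⟨z, rfl | ⟨u, hu, rfl⟩, hzneg⟩ := exists_neg_mem_relQM_of_mem_convexHull hmem hg hgs
  · exact .inl (by rwa [affinePoly_single_zero] at hzneg)
  · refine .inr ⟨u, ?_, by rwa [vLv_C]⟩
    rintro rfl
    simp at hu

theorem relSpecSet_submatrix_eq_empty {n m : ℕ}
    {A : Fin (n+1) → Matrix (Fin (m+1)) (Fin (m+1)) ℝ} (hA : ∀ i, (A i).IsSymm)
    {G : Submodule ℝ (Fin (n+1) → ℝ)} (h : relSpecSet A G = ∅) {u : Fin (m+1) → ℝ}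
    {a : Fin (m+1)} (ha : u a ≠ 0) :
    relSpecSet (fun k => (A k).submatrix a.succAbove a.succAbove)
      (Submodule.span ℝ (G ∪ Set.range fun i k => (A k *ᵥ u) i)) = ∅ := by
  refine Set.eq_empty_of_forall_notMem ?_
  rintro x ⟨hpsd, hx⟩
  refine Set.notMem_empty x (h ▸ ⟨?_, fun g hg => hx g (Submodule.subset_span (.inl hg))⟩)
  have hu : pencilEval A x *ᵥ u = 0 := by
    ext i
    rw [pencilEval_mulVec]
    simpa [Finset.sum_apply, smul_mulVec] using hx _ (Submodule.subset_span (.inr ⟨i, rfl⟩))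
  have hsymm := pencilEval_isSymm hA x
  have hsub : pencilEval (fun k => (A k).submatrix a.succAbove a.succAbove) x =
      (pencilEval A x).submatrix a.succAbove a.succAbove := by
    ext i j
    simp [pencilEval_apply]
  rw [hsub] at hpsd
  generalize pencilEval A x = M at *
  refine .of_dotProduct_mulVec_nonneg hsymm fun y => ?_
  rw [star_trivial]
  obtain ⟨c, w, hw, rfl⟩ : ∃ (c : ℝ) (w : Fin (m+1) → ℝ), w a = 0 ∧ y = c • u + w :=
    ⟨y a / u a, y - (y a / u a) • u, by simp [ha], by simp⟩
  have hu' : u ⬝ᵥ M *ᵥ w = 0 := by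
    rw [dotProduct_mulVec, ← mulVec_transpose, hsymm.eq, hu, zero_dotProduct]
  rw [mulVec_add, mulVec_smul, hu, smul_zero, zero_add, add_dotProduct, smul_dotProduct, hu',
    smul_zero, zero_add]
  have := hpsd.dotProduct_mulVec_nonneg (w ∘ a.succAbove)
  simpa [dotProduct, mulVec, Fin.sum_univ_succAbove _ a, hw] using this

/-- Lifts a certificate from the pencil with a row and column removed. -/
theorem neg_one_mem_relQM_of_submatrix {n m d e : ℕ} (hde : d ≤ e)
    {A : Fin (n+1) → Matrix (Fin (m+1)) (Fin (m+1)) ℝ} {G : Submodule ℝ (Fin (n+1) → ℝ)}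
    {s : Set (Fin (n+1) → ℝ)} (a : Fin (m+1))
    (hs : ∀ q : MvPolynomial (Fin n) ℝ, q.totalDegree ≤ 2 * d → ∀ g ∈ s, ∀ ε : ℝ, 0 < ε →
      q * affinePoly n g + C ε ∈ relQM A G e)
    (h : -1 ∈ relQM (fun k => (A k).submatrix a.succAbove a.succAbove)
      (Submodule.span ℝ (G ∪ s)) d) : -1 ∈ relQM A G e := by
  let N : AddSubmonoid (MvPolynomial (Fin n) ℝ) :=
    { carrier := {f | ∀ ε : ℝ, 0 < ε → f + C ε ∈ relQM A G e}
      zero_mem' := fun ε hε => by simpa using C_mem_relQM hε.le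
      add_mem' := fun {f g} hf hg ε hε => by
        have := add_mem (hf (ε / 2) (half_pos hε)) (hg (ε / 2) (half_pos hε))
        rwa [add_add_add_comm, ← C_add, add_halves] at this }
  have hN : ∀ f ∈ relQM A G e, f ∈ N := fun f hf ε hε => add_mem hf (C_mem_relQM hε.le)
  have hle : relQM (fun k => (A k).submatrix a.succAbove a.succAbove)
      (Submodule.span ℝ (G ∪ s)) d ≤ N := by
    refine relQM_le (fun q hq => hN _ (sq_mem_relQM (hq.trans hde))) (fun v hv => hN _ ?_)
      fun q hq g hg => ?_
    · rw [vLv_submatrix_succAbove]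
      refine vLv_mem_relQM fun b => ?_
      induction b using a.succAboveCases with
      | x => simp
      | p i => simpa using (hv i).trans hde
    · induction hg using Submodule.span_induction generalizing q with
      | mem g hg =>
        obtain hg | hg := hg
        · exact hN _ (mul_affinePoly_mem_relQM (hq.trans (by lia)) hg)
        · exact hs q hq g hg
      | zero => simp
      | add g g' _ _ hg hg' =>
        rw [map_add, mul_add]
        exact add_mem (hg q hq) (hg' q hq)
      | smul c g _ hg =>
        rw [map_smul, mul_smul_comm, ← smul_mul_assoc]
        exact hg _ ((totalDegree_smul_le _ _).trans hq)
  refine neg_one_mem_of_neg_C_mem (half_pos one_pos) ?_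
  convert hle h (1 / 2) (half_pos one_pos) using 1
  rw [← C_1, ← C_neg, ← C_neg, ← C_add]
  norm_num

theorem neg_one_mem_relQM {n m : ℕ} {A : Fin (n+1) → Matrix (Fin m) (Fin m) ℝ}
    (hA : ∀ i, (A i).IsSymm) {G : Submodule ℝ (Fin (n+1) → ℝ)} (h : relSpecSet A G = ∅) :
    -1 ∈ relQM A G (2 ^ (m - 1) - 1) := by
  induction m generalizing G with
  | zero =>
    obtain h | ⟨u, hu, -⟩ := neg_one_mem_or_exists_neg_vLv_mem hA h
    · exact relQM_mono (Nat.zero_le _) h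
    · exact absurd (Subsingleton.elim u 0) hu
  | succ m ih =>
    obtain h1 | ⟨u, hu, hneg⟩ := neg_one_mem_or_exists_neg_vLv_mem hA h
    · exact relQM_mono (Nat.zero_le _) h1
    obtain ⟨a, ha⟩ := Function.ne_iff.1 hu
    have hrec := ih (fun k => (hA k).submatrix a.succAbove)
      (relSpecSet_submatrix_eq_empty hA h ha)
    obtain rfl | hm := Nat.eq_zero_or_pos m
    · refine neg_one_mem_relQM_of_submatrix le_rfl a ?_ hrec
      rintro q hq _ ⟨i, rfl⟩ ε hε
      refine add_mem ?_ (C_mem_relQM hε.le)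
      obtain ⟨c, rfl⟩ : ∃ c, q = C c := ⟨_, totalDegree_eq_zero_iff_eq_C.1 (by simpa using hq)⟩
      obtain rfl : a = i := Subsingleton.elim (α := Fin 1) _ _
      have hlin : (fun k => (A k *ᵥ u) a) = (u a)⁻¹ • fun k => u ⬝ᵥ A k *ᵥ u := by
        ext k
        obtain rfl : a = 0 := Subsingleton.elim (α := Fin 1) _ _
        have ha' : u 0 ≠ 0 := ha
        simp [dotProduct, ha']
      have heq : C c * affinePoly n (fun k => (A k *ᵥ u) a) =
          C (c * (u a)⁻¹) * vLv A fun b => C (u b) := by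
        rw [hlin, map_smul, vLv_C, smul_eq_C_mul, C_mul, mul_assoc]
      simp only [heq]
      obtain hc | hc := le_total 0 (c * (u a)⁻¹)
      · exact C_mul_mem_relQM hc (vLv_mem_relQM fun b => by simp)
      · simpa using C_mul_mem_relQM (neg_nonneg.2 hc) hneg
    · refine neg_one_mem_relQM_of_submatrix ?_ a ?_ hrec
      · exact Nat.sub_le_sub_right (Nat.pow_le_pow_right two_pos (by lia)) 1
      · rintro q hq _ ⟨i, rfl⟩ ε hε
        have hpow : 2 ^ (m + 1 - 1) - 1 = 2 * (2 ^ (m - 1) - 1) + 1 := by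
          obtain ⟨k, rfl⟩ : ∃ k, m = k + 1 := ⟨m - 1, by lia⟩
          have := Nat.one_le_two_pow (n := k)
          simp only [Nat.add_sub_cancel, pow_succ]
          lia
        rw [hpow]
        exact mul_add_C_mem_relQM hA hneg hq i hε

theorem memQMdeg_of_mem_relQM_bot {n m d : ℕ} {A : Fin (n+1) → Matrix (Fin m) (Fin m) ℝ}
    {f : MvPolynomial (Fin n) ℝ} (hf : f ∈ relQM A ⊥ d) : memQMdeg A d f := by
  let N : AddSubmonoid (MvPolynomial (Fin n) ℝ) :=
    { carrier := {f | memQMdeg A d f}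
      zero_mem' := ⟨0, 0, Fin.elim0, Fin.elim0, fun i => i.elim0, fun i => i.elim0, by simp⟩
      add_mem' := by
        rintro _ _ ⟨k₁, k₂, q, v, hq, hv, rfl⟩ ⟨k₁', k₂', q', v', hq', hv', rfl⟩
        refine ⟨k₁ + k₁', k₂ + k₂', Fin.append q q', Fin.append v v', fun i => ?_, fun j => ?_, ?_⟩
        · induction i using Fin.addCases <;> simp [hq, hq']
        · induction j using Fin.addCases <;> simp [hv, hv']
        · simp only [Fin.sum_univ_add, Fin.append_left, Fin.append_right]
          ring }
  suffices relQM A ⊥ d ≤ N from this hf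
  refine relQM_le (fun q hq => ?_) (fun v hv => ?_) fun q _ g hg => ?_
  · exact ⟨1, 0, fun _ => q, Fin.elim0, fun _ => hq, fun i => i.elim0, by simp⟩
  · exact ⟨0, 1, Fin.elim0, fun _ => v, fun i => i.elim0, fun _ => hv, by simp⟩
  · rw [(Submodule.mem_bot ℝ).1 hg, map_zero, mul_zero]
    exact N.zero_mem

/-- **Theorem (exponential degree bound in the size of the pencil).** If `L` is an
infeasible linear pencil of size `m`, then `-1 ∈ M_L^(2^(m-1) - 1)`. -/
theorem neg_one_mem_truncatedQM_two_pow_size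
    (n m : ℕ) (A : Fin (n+1) → Matrix (Fin m) (Fin m) ℝ)
    (hsymm : ∀ i, (A i).IsSymm)
    (hinf : specSet A = ∅) :
    memQMdeg A (2^(m-1) - 1) (-1) := by
  refine memQMdeg_of_mem_relQM_bot (neg_one_mem_relQM hsymm ?_)
  refine Set.eq_empty_of_forall_notMem fun x hx => ?_
  exact Set.notMem_empty x (hinf ▸ hx.1)
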